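/- Every union-closed, separating family of sets of dimension two has an abundant element; in fact every optimal element of such a family is abundant. -/

import Mathlib

/-- Every union-closed separating family of dimension two has an abundant
element; in fact every optimal element is abundant. -/
theorem stmt_15 {α : Type*} (F : Set (Set α))
    (hUC : ∀ A ∈ F, ∀ B ∈ F, A ∪ B ∈ F)
    (hsep : ∀ x ∈ ⋃₀ F, ∀ y ∈ ⋃₀ F,
      {A ∈ F | x ∈ A} = {A ∈ F | y ∈ A} → x = y)
    (hdim_le : ∀ A ∈ F, ∀ B ∈ F, ∀ C ∈ F, ∀ D ∈ F,
      A ⊂ B → B ⊂ C → C ⊂ D → False)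
    (hdim_ge : ∃ A ∈ F, ∃ B ∈ F, ∃ C ∈ F, A ⊂ B ∧ B ⊂ C) :
    (∀ x ∈ ⋃₀ F,
      (∀ y ∈ ⋃₀ F, {A ∈ F | x ∈ A} ⊆ {A ∈ F | y ∈ A} →
        {A ∈ F | y ∈ A} = {A ∈ F | x ∈ A}) →
      ∃ f : {A : Set α // A ∈ F ∧ x ∉ A} → {A : Set α // A ∈ F ∧ x ∈ A},
        Function.Injective f) ∧
    ∃ x ∈ ⋃₀ F,
      ∃ f : {A : Set α // A ∈ F ∧ x ∉ A} → {A : Set α // A ∈ F ∧ x ∈ A},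
        Function.Injective f := by
  classical
  obtain ⟨P, hP, Q, hQ, U, hU, hPQ, hQU⟩ := hdim_ge
  have htop : ∀ D ∈ F, D ⊆ U := by
    intro D hD
    by_contra h
    refine hdim_le P hP Q hQ U hU (U ∪ D) (hUC U hU D hD) hPQ hQU ?_
    exact ⟨Set.subset_union_left, fun h' => h (Set.subset_union_right.trans h')⟩
  have hxU : ∀ x ∈ ⋃₀ F, x ∈ U := by
    rintro x ⟨D, hD, hx⟩
    exact htop D hD hx
  -- a nontrivial pair in the sets avoiding `x` has its larger member as top
  have hT : ∀ x ∈ U, ∀ A ∈ F, ∀ B ∈ F, x ∉ B → A ⊂ B → ∀ D ∈ F, x ∉ D → D ⊆ B := by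
    intro x hx A hA B hB hxB hAB D hD hxD
    by_contra h
    have hBD := hUC B hB D hD
    refine hdim_le A hA B hB (B ∪ D) hBD U hU hAB
      ⟨Set.subset_union_left, fun h' => h (Set.subset_union_right.trans h')⟩
      ⟨htop _ hBD, fun h' => ?_⟩
    rcases h' hx with h1 | h1
    · exact hxB h1
    · exact hxD h1
  have hpair : ∀ x, ∀ A ∈ F, ∀ A' ∈ F, x ∉ A → x ∉ A' → A ≠ A' →
      ∃ A0 ∈ F, ∃ B0 ∈ F, x ∉ A0 ∧ x ∉ B0 ∧ A0 ⊂ B0 ∧ B0 = A ∪ A' := by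
    intro x A hA A' hA' hx hx' hne
    have hun : x ∉ A ∪ A' := fun h => h.elim hx hx'
    by_cases h : A' ⊆ A
    · refine ⟨A', hA', A ∪ A', hUC A hA A' hA', hx', hun, ⟨Set.subset_union_right, ?_⟩, rfl⟩
      intro h2
      exact hne (Set.Subset.antisymm (Set.subset_union_left.trans h2) h)
    · exact ⟨A, hA, A ∪ A', hUC A hA A' hA', hx, hun,
        ⟨Set.subset_union_left, fun h' => h (Set.subset_union_right.trans h')⟩, rfl⟩
  have hsub : ∀ x ∈ U, (∀ A ∈ F, ∀ A' ∈ F, x ∉ A → x ∉ A' → A = A') →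
      ∃ f : {A : Set α // A ∈ F ∧ x ∉ A} → {A : Set α // A ∈ F ∧ x ∈ A},
        Function.Injective f := by
    intro x hx h
    refine ⟨fun _ => ⟨U, hU, hx⟩, fun a b _ => Subtype.ext ?_⟩
    exact h a.1 a.2.1 b.1 b.2.1 a.2.2 b.2.2
  have hopt : ∀ x ∈ ⋃₀ F,
      (∀ y ∈ ⋃₀ F, {A ∈ F | x ∈ A} ⊆ {A ∈ F | y ∈ A} →
        {A ∈ F | y ∈ A} = {A ∈ F | x ∈ A}) →
      ∃ f : {A : Set α // A ∈ F ∧ x ∉ A} → {A : Set α // A ∈ F ∧ x ∈ A},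
        Function.Injective f := by
    intro x hx hmax
    have hxu := hxU x hx
    by_cases hs : ∀ A ∈ F, ∀ A' ∈ F, x ∉ A → x ∉ A' → A = A'
    · exact hsub x hxu hs
    push Not at hs
    obtain ⟨A1, hA1, A2, hA2, hx1, hx2, hne⟩ := hs
    obtain ⟨A0, hA0, B, hB, hxA0, hxB, hAB, -⟩ := hpair x A1 hA1 A2 hA2 hx1 hx2 hne
    have hBtop := hT x hxu A0 hA0 B hB hxB hAB
    have hunion : ∀ A ∈ F, ∀ A' ∈ F, x ∉ A → x ∉ A' → A ≠ A' → B ⊆ A ∪ A' := by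
      intro A hA A' hA' h h' hn
      obtain ⟨C, hC, D, hD, hxC, hxD, hCD, hDe⟩ := hpair x A hA A' hA' h h' hn
      rw [← hDe]
      exact hT x hxu C hC D hD hxD hCD B hB hxB
    have hD : ∀ a : {A : Set α // A ∈ F ∧ x ∉ A}, ∃ D : {A : Set α // A ∈ F ∧ x ∈ A},
        a.1 ⊆ D.1 ∧ (a.1 ≠ B → ¬ B ⊆ D.1) ∧ (a.1 = B → B ⊆ D.1) := by
      rintro ⟨A, hA, hxA⟩
      by_cases hAB : A = B
      · exact ⟨⟨U, hU, hxu⟩, htop A hA, fun h => absurd hAB h, fun _ => htop B hB⟩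
      have hAsub := hBtop A hA hxA
      obtain ⟨y, hyB, hyA⟩ : ∃ y ∈ B, y ∉ A := by
        by_contra! h
        exact hAB (Set.Subset.antisymm hAsub h)
      obtain ⟨C, hC, hxC, hyC⟩ : ∃ C ∈ F, x ∈ C ∧ y ∉ C := by
        by_contra! h
        have := hmax y ⟨B, hB, hyB⟩ (fun C hC => ⟨hC.1, h C hC.1 hC.2⟩)
        have hB' : B ∈ {A ∈ F | y ∈ A} := ⟨hB, hyB⟩
        rw [this] at hB'
        exact hxB hB'.2
      refine ⟨⟨C ∪ A, hUC C hC A hA, Or.inl hxC⟩, Set.subset_union_right, fun _ h => ?_,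
        fun h => absurd h hAB⟩
      exact (h hyB).elim hyC hyA
    choose f hf1 hf2 hf3 using hD
    refine ⟨f, fun a b hab => ?_⟩
    by_contra hn
    have hn' : a.1 ≠ b.1 := fun h => hn (Subtype.ext h)
    have hBs : B ⊆ (f a).1 := by
      refine (hunion a.1 a.2.1 b.1 b.2.1 a.2.2 b.2.2 hn').trans (Set.union_subset (hf1 a) ?_)
      rw [hab]
      exact hf1 b
    by_cases ha : a.1 = B
    · have hb : b.1 ≠ B := fun h => hn' (ha.trans h.symm)
      exact hf2 b hb (hab ▸ hBs)
    · exact hf2 a ha hBs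
  refine ⟨hopt, ?_⟩
  obtain ⟨x, hx, -⟩ := Set.exists_of_ssubset hQU
  have hxF : x ∈ ⋃₀ F := ⟨U, hU, hx⟩
  by_cases hm : ∀ y ∈ ⋃₀ F, {A ∈ F | x ∈ A} ⊆ {A ∈ F | y ∈ A} →
        {A ∈ F | y ∈ A} = {A ∈ F | x ∈ A}
  · exact ⟨x, hxF, hopt x hxF hm⟩
  push Not at hm
  obtain ⟨y, hy, hxy, hne⟩ := hm
  refine ⟨y, hy, hsub y (hxU y hy) ?_⟩
  by_contra! hs
  obtain ⟨A1, hA1, A2, hA2, hy1, hy2, hne'⟩ := hs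
  obtain ⟨A0, hA0, B, hB, hyA0, hyB, hAB, -⟩ := hpair y A1 hA1 A2 hA2 hy1 hy2 hne'
  have hxB : x ∉ B := fun h => hyB (hxy ⟨hB, h⟩ : B ∈ {A ∈ F | y ∈ A}).2
  apply hne
  refine Set.Subset.antisymm ?_ hxy
  rintro D ⟨hD, hyD⟩
  refine ⟨hD, ?_⟩
  by_contra hxD
  exact hyB (hT x hx A0 hA0 B hB hxB hAB D hD hxD hyD)
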